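/- Corollary 2: let Λ be a quantum channel on d×d complex matrices, h a positive semidefinite Hermitian d×d matrix, and 𝔢 ∈ [0, λ_max(h)]. Suppose that for every e ∈ [0, λ_max(h)] and every n ≥ 1 there exists a d×d density matrix σ (possibly depending on n) with re Tr[σ h] ≤ e such that for all unit vectors ψ_1, …, ψ_n ∈ ℂ^d with Σ_{i} ⟨ψ_i, h ψ_i⟩ ≤ n e one has ℰ(Λ^{⊗n}(|ψ_1⟩⟨ψ_1| ⊗ ⋯ ⊗ |ψ_n⟩⟨ψ_n|); h^{(n)}) ≤ ℰ((Λ(σ))^{⊗n}; h^{(n)}). Then the sequence n ↦ ℰ_sep^{(n)}(Λ; n𝔢)/n converges to χ_tot(Λ;𝔢). -/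

import Mathlib

/-!
Product unitaries and the identity are admissible in the supremum defining the ergotropy, and its
objective is linear in the state. So ergotropy is nonnegative, convex in the state, and
superadditive on tensor products with noninteracting Hamiltonians. By Fekete's lemma the supremum
defining the total ergotropy of `σ` is therefore the limit of `ergo (tpow σ n) (hSum h n) / n`.

Upper bound, for each `n ≥ 1`. A separable state is a mixture of pure product states whose mean
energies per site average to at most `𝔢`. By convexity its output ergotropy is at most the average
of theirs. Optimality of i.i.d. inputs bounds the term of mean energy `e` by the ergotropy of some
`(Λ σ)^{⊗n}` with `σ` of energy at most `e`, hence by `n * E1tot Λ h e`. The average is at most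
`n * chiTot`.

Lower bound, by time sharing. Take weights `p j` and states `ρ j` of average energy at most `𝔢` with
`∑ j, p j * Etot (Λ (ρ j)) h` close to `chiTot`. On `n` sites put `⌊p j n⌋` copies of each `ρ j` and
fill the remaining sites with a zero-energy state, which exists by the hypothesis at `e = 0`. This
product state obeys the energy constraint, and by superadditivity its output ergotropy is at least
the sum of those of the blocks, which per site tends to `∑ j, p j * Etot (Λ (ρ j)) h`.
-/

open Matrix Filter Topology
open scoped ComplexOrder Kronecker

noncomputable section

/-- A density matrix: positive semidefinite with unit trace. -/
def IsDensity {n : Type*} [Fintype n] [DecidableEq n] (ρ : Matrix n n ℂ) : Prop :=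
  ρ.PosSemidef ∧ ρ.trace = 1

/-- The ergotropy `ℰ(ρ;H) = ⨆_{U ∈ U(d)} (re Tr[ρH] − re Tr[U ρ U† H])`. -/
def ergo {n : Type*} [Fintype n] [DecidableEq n] (ρ H : Matrix n n ℂ) : ℝ :=
  ⨆ U : Matrix.unitaryGroup n ℂ,
    ((ρ * H).trace.re -
      ((U : Matrix n n ℂ) * ρ * star (U : Matrix n n ℂ) * H).trace.re)

/-- `N`-fold tensor power of a `d × d` matrix:
`ρ^{⊗N} f g = ∏_{i<N} ρ (f i) (g i)`. -/
def tpow {d : ℕ} (ρ : Matrix (Fin d) (Fin d) ℂ) (N : ℕ) :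
    Matrix (Fin N → Fin d) (Fin N → Fin d) ℂ :=
  Matrix.of fun f g => ∏ i, ρ (f i) (g i)

/-- Tensor product `ρ₁ ⊗ ⋯ ⊗ ρₙ` of `n` single-site matrices. -/
def prodMat {d n : ℕ} (ρs : Fin n → Matrix (Fin d) (Fin d) ℂ) :
    Matrix (Fin n → Fin d) (Fin n → Fin d) ℂ :=
  Matrix.of fun f g => ∏ i, ρs i (f i) (g i)

/-- Noninteracting `N`-site Hamiltonian:
`h^{(N)} f g = Σ_{i<N} h (f i) (g i) · ∏_{j≠i} (if f j = g j then 1 else 0)`. -/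
def hSum {d : ℕ} (h : Matrix (Fin d) (Fin d) ℂ) (N : ℕ) :
    Matrix (Fin N → Fin d) (Fin N → Fin d) ℂ :=
  Matrix.of fun f g =>
    ∑ i, h (f i) (g i) * ∏ j ∈ Finset.univ.erase i, (if f j = g j then (1:ℂ) else 0)

/-- The ampliation `Λ ⊗ id_k` of a linear map on `d × d` matrices. -/
def Ampliation {d : ℕ} (Λ : Matrix (Fin d) (Fin d) ℂ →ₗ[ℂ] Matrix (Fin d) (Fin d) ℂ)
    (k : ℕ) (M : Matrix (Fin d × Fin k) (Fin d × Fin k) ℂ) :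
    Matrix (Fin d × Fin k) (Fin d × Fin k) ℂ :=
  Matrix.of fun p q => Λ (Matrix.of fun i' j' => M (i', p.2) (j', q.2)) p.1 q.1

/-- A quantum channel: a ℂ-linear, trace-preserving, completely positive map. -/
def IsChannel {d : ℕ} (Λ : Matrix (Fin d) (Fin d) ℂ →ₗ[ℂ] Matrix (Fin d) (Fin d) ℂ) : Prop :=
  (∀ M, (Λ M).trace = M.trace) ∧
  ∀ k : ℕ, ∀ M : Matrix (Fin d × Fin k) (Fin d × Fin k) ℂ,
    M.PosSemidef → (Ampliation Λ k M).PosSemidef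

/-- Local ergotropy of an `n`-site state: the supremum is restricted to
product unitaries `U₁ ⊗ ⋯ ⊗ Uₙ`. -/
def locErgo {d n : ℕ} (σ H : Matrix (Fin n → Fin d) (Fin n → Fin d) ℂ) : ℝ :=
  ⨆ U : Fin n → Matrix.unitaryGroup (Fin d) ℂ,
    ((σ * H).trace.re -
      ((prodMat fun i => (U i : Matrix (Fin d) (Fin d) ℂ)) * σ *
        star (prodMat fun i => (U i : Matrix (Fin d) (Fin d) ℂ)) * H).trace.re)

/-- Von Neumann entropy `S(σ) = Σ_i −λ_i log λ_i` of a Hermitian matrix. -/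
def vnEntropy {n : Type*} [Fintype n] [DecidableEq n]
    {σ : Matrix n n ℂ} (hσ : σ.IsHermitian) : ℝ :=
  ∑ i, Real.negMulLog (hσ.eigenvalues i)

/-- `i`-th single-site reduced density matrix of an `n`-site state. -/
def red {d n : ℕ} (ρ : Matrix (Fin n → Fin d) (Fin n → Fin d) ℂ) (i : Fin n) :
    Matrix (Fin d) (Fin d) ℂ :=
  Matrix.of fun a b =>
    ∑ f ∈ Finset.univ.filter (fun f : Fin n → Fin d => f i = a), ρ f (Function.update f i b)

/-- Separability: `ρ` is a convex combination of product density matrices. -/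
def SepState {d n : ℕ} (ρ : Matrix (Fin n → Fin d) (Fin n → Fin d) ℂ) : Prop :=
  ∃ (m : ℕ) (p : Fin m → ℝ) (σs : Fin m → Fin n → Matrix (Fin d) (Fin d) ℂ),
    (∀ k, 0 ≤ p k) ∧ (∑ k, p k = 1) ∧ (∀ k i, IsDensity (σs k i)) ∧
    ρ = ∑ k, (p k : ℂ) • prodMat (σs k)

/-- Total ergotropy `ℰ_tot(σ;h) = ⨆_{N≥1} ℰ(σ^{⊗N}; h^{(N)})/N`. -/
def Etot {d : ℕ} (σ h : Matrix (Fin d) (Fin d) ℂ) : ℝ :=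
  ⨆ N : ℕ+, ergo (tpow σ (N:ℕ)) (hSum h (N:ℕ)) / (N:ℕ)

/-- Largest eigenvalue of a Hermitian matrix. -/
def lamMax {d : ℕ} {h : Matrix (Fin d) (Fin d) ℂ} (hh : h.IsHermitian) : ℝ :=
  ⨆ i, hh.eigenvalues i

/-- Single-shot energy-constrained maximal output ergotropy `ℰ^{(1)}(Λ;e)`. -/
def E1 {d : ℕ} (Λ : Matrix (Fin d) (Fin d) ℂ →ₗ[ℂ] Matrix (Fin d) (Fin d) ℂ)
    (h : Matrix (Fin d) (Fin d) ℂ) (e : ℝ) : ℝ :=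
  sSup {x | ∃ ρ : Matrix (Fin d) (Fin d) ℂ,
    IsDensity ρ ∧ (ρ * h).trace.re ≤ e ∧ x = ergo (Λ ρ) h}

/-- Single-shot energy-constrained maximal output total ergotropy `ℰ_tot^{(1)}(Λ;e)`. -/
def E1tot {d : ℕ} (Λ : Matrix (Fin d) (Fin d) ℂ →ₗ[ℂ] Matrix (Fin d) (Fin d) ℂ)
    (h : Matrix (Fin d) (Fin d) ℂ) (e : ℝ) : ℝ :=
  sSup {x | ∃ ρ : Matrix (Fin d) (Fin d) ℂ,
    IsDensity ρ ∧ (ρ * h).trace.re ≤ e ∧ x = Etot (Λ ρ) h}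

/-- `χ(Λ;e)`: supremum of `Σ_j p_j ℰ^{(1)}(Λ;e_j)` over finite probability vectors
`(p_j)` and energies `e_j ∈ [0, lmax]` with `Σ_j p_j e_j ≤ e`. -/
def chi {d : ℕ} (Λ : Matrix (Fin d) (Fin d) ℂ →ₗ[ℂ] Matrix (Fin d) (Fin d) ℂ)
    (h : Matrix (Fin d) (Fin d) ℂ) (lmax e : ℝ) : ℝ :=
  sSup {x | ∃ (m : ℕ) (p ev : Fin m → ℝ),
    (∀ j, 0 ≤ p j) ∧ (∑ j, p j = 1) ∧ (∀ j, ev j ∈ Set.Icc (0:ℝ) lmax) ∧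
    (∑ j, p j * ev j ≤ e) ∧ x = ∑ j, p j * E1 Λ h (ev j)}

/-- `χ_tot(Λ;e)`: as `χ` but with the total ergotropy. -/
def chiTot {d : ℕ} (Λ : Matrix (Fin d) (Fin d) ℂ →ₗ[ℂ] Matrix (Fin d) (Fin d) ℂ)
    (h : Matrix (Fin d) (Fin d) ℂ) (lmax e : ℝ) : ℝ :=
  sSup {x | ∃ (m : ℕ) (p ev : Fin m → ℝ),
    (∀ j, 0 ≤ p j) ∧ (∑ j, p j = 1) ∧ (∀ j, ev j ∈ Set.Icc (0:ℝ) lmax) ∧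
    (∑ j, p j * ev j ≤ e) ∧ x = ∑ j, p j * E1tot Λ h (ev j)}

/-- `ℰ_loc^{(n)}(Λ;E)`. -/
def ElocN {d : ℕ}
    (Λfam : ∀ n : ℕ, Matrix (Fin n → Fin d) (Fin n → Fin d) ℂ →ₗ[ℂ]
      Matrix (Fin n → Fin d) (Fin n → Fin d) ℂ)
    (h : Matrix (Fin d) (Fin d) ℂ) (n : ℕ) (E : ℝ) : ℝ :=
  sSup {x | ∃ ρ : Matrix (Fin n → Fin d) (Fin n → Fin d) ℂ,
    IsDensity ρ ∧ (ρ * hSum h n).trace.re ≤ E ∧ x = locErgo (Λfam n ρ) (hSum h n)}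

/-- `ℰ_{loc,sep}^{(n)}(Λ;E)`. -/
def ElocSepN {d : ℕ}
    (Λfam : ∀ n : ℕ, Matrix (Fin n → Fin d) (Fin n → Fin d) ℂ →ₗ[ℂ]
      Matrix (Fin n → Fin d) (Fin n → Fin d) ℂ)
    (h : Matrix (Fin d) (Fin d) ℂ) (n : ℕ) (E : ℝ) : ℝ :=
  sSup {x | ∃ ρ : Matrix (Fin n → Fin d) (Fin n → Fin d) ℂ,
    IsDensity ρ ∧ SepState ρ ∧ (ρ * hSum h n).trace.re ≤ E ∧
    x = locErgo (Λfam n ρ) (hSum h n)}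

/-- `ℰ_sep^{(n)}(Λ;E)`. -/
def EsepN {d : ℕ}
    (Λfam : ∀ n : ℕ, Matrix (Fin n → Fin d) (Fin n → Fin d) ℂ →ₗ[ℂ]
      Matrix (Fin n → Fin d) (Fin n → Fin d) ℂ)
    (h : Matrix (Fin d) (Fin d) ℂ) (n : ℕ) (E : ℝ) : ℝ :=
  sSup {x | ∃ ρ : Matrix (Fin n → Fin d) (Fin n → Fin d) ℂ,
    IsDensity ρ ∧ SepState ρ ∧ (ρ * hSum h n).trace.re ≤ E ∧
    x = ergo (Λfam n ρ) (hSum h n)}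

/-! ### Positive semidefinite matrices and states -/

section States

variable {n : Type*} [Fintype n]

open scoped MatrixOrder in
lemma exists_eq_conjTranspose_mul_self_of_posSemidef {A : Matrix n n ℂ} (hA : A.PosSemidef) :
    ∃ B : Matrix n n ℂ, A = Bᴴ * B := by
  classical
  exact CStarAlgebra.nonneg_iff_eq_star_mul_self.mp (Matrix.nonneg_iff_posSemidef.mpr hA)

lemma trace_mul_nonneg_of_posSemidef {A B : Matrix n n ℂ} (hA : A.PosSemidef)
    (hB : B.PosSemidef) : 0 ≤ (A * B).trace := by
  obtain ⟨C, rfl⟩ := exists_eq_conjTranspose_mul_self_of_posSemidef hA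
  rw [Matrix.mul_assoc, Matrix.trace_mul_comm]
  exact (hB.mul_mul_conjTranspose_same C).trace_nonneg

lemma trace_mul_re_nonneg_of_posSemidef {A B : Matrix n n ℂ} (hA : A.PosSemidef)
    (hB : B.PosSemidef) : 0 ≤ (A * B).trace.re :=
  (Complex.nonneg_iff.mp (trace_mul_nonneg_of_posSemidef hA hB)).1

lemma trace_vecMulVec_star_mul (v : n → ℂ) (H : Matrix n n ℂ) :
    (vecMulVec v (star v) * H).trace = star v ⬝ᵥ H *ᵥ v := by
  rw [Matrix.trace_mul_comm, mul_vecMulVec, trace_vecMulVec, dotProduct_comm]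

lemma trace_submatrix_equiv {m R : Type*} [Fintype m] [AddCommMonoid R] (e : m ≃ n)
    (A : Matrix n n R) : (A.submatrix e e).trace = A.trace :=
  e.sum_comp fun i => A i i

variable [DecidableEq n]

lemma isDensity_vecMulVec_star {v : n → ℂ} (hv : star v ⬝ᵥ v = 1) :
    IsDensity (vecMulVec v (star v)) :=
  ⟨posSemidef_vecMulVec_self_star v, by rw [trace_vecMulVec, dotProduct_comm, hv]⟩

lemma sum_eigenvalues_smul_vecMulVec {A : Matrix n n ℂ} (hA : A.IsHermitian) :
    ∑ a, (hA.eigenvalues a : ℂ) •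
      vecMulVec ⇑(hA.eigenvectorBasis a) (star ⇑(hA.eigenvectorBasis a)) = A := by
  conv_rhs => rw [hA.spectral_theorem, Unitary.conjStarAlgAut_apply]
  ext i j
  simp [Matrix.sum_apply, Matrix.mul_apply, vecMulVec_apply, diagonal_apply, mul_assoc,
    mul_left_comm]

lemma IsDensity.exists_eq_sum_pure {ρ : Matrix n n ℂ} (hρ : IsDensity ρ) :
    ∃ (w : n → ℝ) (v : n → n → ℂ), (∀ a, 0 ≤ w a) ∧ ∑ a, w a = 1 ∧
      (∀ a, star (v a) ⬝ᵥ v a = 1) ∧ ρ = ∑ a, (w a : ℂ) • vecMulVec (v a) (star (v a)) := by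
  have hH := hρ.1.isHermitian
  refine ⟨hH.eigenvalues, fun a => hH.eigenvectorBasis a, hρ.1.eigenvalues_nonneg, ?_,
    fun a => ?_, (sum_eigenvalues_smul_vecMulVec hH).symm⟩
  · have htrace := hH.trace_eq_sum_eigenvalues
    rw [hρ.2] at htrace
    simpa using (congrArg Complex.re htrace).symm
  · rw [dotProduct_comm, ← EuclideanSpace.inner_eq_star_dotProduct]
    simp

end States

section LargestEigenvalue

variable {d : ℕ} {h : Matrix (Fin d) (Fin d) ℂ}

lemma lamMax_nonneg (hh : h.PosSemidef) : 0 ≤ lamMax hh.isHermitian :=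
  Real.iSup_nonneg hh.eigenvalues_nonneg

open scoped MatrixOrder in
lemma posSemidef_lamMax_smul_one_sub (hh : h.IsHermitian) :
    ((lamMax hh : ℂ) • (1 : Matrix (Fin d) (Fin d) ℂ) - h).PosSemidef := by
  have hle : h ≤ algebraMap ℝ _ (lamMax hh) := by
    rw [le_algebraMap_iff_spectrum_le (ha := hh), hh.spectrum_real_eq_range_eigenvalues,
      Set.forall_mem_range]
    exact le_ciSup (Set.finite_range hh.eigenvalues).bddAbove
  simpa [Algebra.algebraMap_eq_smul_one] using Matrix.le_iff.mp hle

lemma IsDensity.trace_mul_re_le_lamMax {ρ : Matrix (Fin d) (Fin d) ℂ} (hρ : IsDensity ρ)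
    (hh : h.IsHermitian) : (ρ * h).trace.re ≤ lamMax hh := by
  have hgap := trace_mul_re_nonneg_of_posSemidef hρ.1 (posSemidef_lamMax_smul_one_sub hh)
  rw [Matrix.mul_sub, Matrix.trace_sub] at hgap
  simpa [hρ.2] using hgap

end LargestEigenvalue

lemma IsChannel.isDensity {d : ℕ}
    {Λ : Matrix (Fin d) (Fin d) ℂ →ₗ[ℂ] Matrix (Fin d) (Fin d) ℂ} (hΛ : IsChannel Λ)
    {ρ : Matrix (Fin d) (Fin d) ℂ} (hρ : IsDensity ρ) : IsDensity (Λ ρ) :=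
  ⟨(hΛ.2 1 (ρ.submatrix Prod.fst Prod.fst) (hρ.1.submatrix _)).submatrix fun i => (i, 0),
    by rw [hΛ.1, hρ.2]⟩

/-! ### Tensor products -/

section Append

variable {α : Type*} {m n : ℕ}

lemma append_const (a : α) : Fin.append (fun _ : Fin m => a) (fun _ : Fin n => a) = fun _ => a := by
  funext i
  cases i using Fin.addCases <;> simp

lemma append_update_left (u : Fin m → α) (v : Fin n → α) (i : Fin m) (a : α) :
    Fin.append (Function.update u i a) v =
      Function.update (Fin.append u v) (Fin.castAdd n i) a := by
  funext j
  cases j using Fin.addCases with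
  | left j => simp [Function.update_apply]
  | right j => simp [Fin.ext_iff, (Nat.lt_add_right j i.2).ne']

lemma append_update_right (u : Fin m → α) (v : Fin n → α) (i : Fin n) (a : α) :
    Fin.append u (Function.update v i a) =
      Function.update (Fin.append u v) (Fin.natAdd m i) a := by
  funext j
  cases j using Fin.addCases with
  | left j => simp [Fin.ext_iff, (Nat.lt_add_right i j.2).ne]
  | right j => simp [Function.update_apply]

lemma forall_append {p : α → Prop} {u : Fin m → α} {v : Fin n → α} (hu : ∀ i, p (u i))
    (hv : ∀ i, p (v i)) (i : Fin (m + n)) : p (Fin.append u v i) := by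
  cases i using Fin.addCases <;> simp [hu, hv]

end Append

section Tensor

variable {d m n : ℕ}

lemma prodMat_mul (A B : Fin n → Matrix (Fin d) (Fin d) ℂ) :
    prodMat A * prodMat B = prodMat fun i => A i * B i := by
  ext f g
  simp only [prodMat, Matrix.mul_apply, Matrix.of_apply, ← Finset.prod_mul_distrib,
    Fintype.prod_sum]

lemma conjTranspose_prodMat (A : Fin n → Matrix (Fin d) (Fin d) ℂ) :
    (prodMat A)ᴴ = prodMat fun i => (A i)ᴴ := by
  ext f g
  simp [prodMat, Matrix.conjTranspose_apply]

lemma prodMat_one : prodMat (fun _ : Fin n => (1 : Matrix (Fin d) (Fin d) ℂ)) = 1 := by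
  ext f g
  simp only [prodMat, Matrix.of_apply, Matrix.one_apply, Finset.prod_ite_zero,
    Finset.prod_const_one, Finset.mem_univ, forall_true_left, funext_iff]

lemma trace_prodMat (A : Fin n → Matrix (Fin d) (Fin d) ℂ) :
    (prodMat A).trace = ∏ i, (A i).trace := by
  simp only [prodMat, Matrix.trace, Matrix.diag, Matrix.of_apply, Fintype.prod_sum]

lemma prodMat_sum_smul {κ : Type*} [Fintype κ] (w : Fin n → κ → ℂ)
    (P : Fin n → κ → Matrix (Fin d) (Fin d) ℂ) :
    prodMat (fun i => ∑ a, w i a • P i a) =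
      ∑ c : Fin n → κ, (∏ i, w i (c i)) • prodMat fun i => P i (c i) := by
  ext f g
  simp only [prodMat, Matrix.of_apply, Matrix.sum_apply, Matrix.smul_apply, smul_eq_mul,
    Fintype.prod_sum, Finset.prod_mul_distrib]

lemma posSemidef_prodMat {A : Fin n → Matrix (Fin d) (Fin d) ℂ}
    (hA : ∀ i, (A i).PosSemidef) : (prodMat A).PosSemidef := by
  choose B hB using fun i => exists_eq_conjTranspose_mul_self_of_posSemidef (hA i)
  obtain rfl : A = fun i => (B i)ᴴ * B i := funext hB
  rw [← prodMat_mul, ← conjTranspose_prodMat]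
  exact posSemidef_conjTranspose_mul_self _

lemma isDensity_prodMat {A : Fin n → Matrix (Fin d) (Fin d) ℂ}
    (hA : ∀ i, IsDensity (A i)) : IsDensity (prodMat A) :=
  ⟨posSemidef_prodMat fun i => (hA i).1, by
    rw [trace_prodMat, Finset.prod_eq_one fun i _ => (hA i).2]⟩

lemma prodMat_append (A : Fin m → Matrix (Fin d) (Fin d) ℂ)
    (B : Fin n → Matrix (Fin d) (Fin d) ℂ) :
    prodMat (Fin.append A B) =
      (prodMat A ⊗ₖ prodMat B).submatrix (Fin.appendEquiv m n).symm (Fin.appendEquiv m n).symm := by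
  ext f g
  simp [prodMat, Fin.prod_univ_add, Fin.appendEquiv]

lemma tpow_eq_prodMat (ρ : Matrix (Fin d) (Fin d) ℂ) (n : ℕ) :
    tpow ρ n = prodMat fun _ => ρ := rfl

variable {h : Matrix (Fin d) (Fin d) ℂ}

lemma hSum_eq_sum_prodMat (h : Matrix (Fin d) (Fin d) ℂ) (n : ℕ) :
    hSum h n = ∑ i, prodMat (Function.update (fun _ => 1) i h) := by
  ext f g
  simp only [hSum, prodMat, Matrix.of_apply, Matrix.sum_apply]
  refine Finset.sum_congr rfl fun i _ => ?_
  rw [← Finset.mul_prod_erase _ _ (Finset.mem_univ i), Function.update_self]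
  congr 1
  refine Finset.prod_congr rfl fun j hj => ?_
  rw [Function.update_of_ne (Finset.ne_of_mem_erase hj), Matrix.one_apply]

lemma posSemidef_hSum (hh : h.PosSemidef) (n : ℕ) : (hSum h n).PosSemidef := by
  rw [hSum_eq_sum_prodMat]
  refine Matrix.posSemidef_sum _ fun i _ => posSemidef_prodMat fun j => ?_
  obtain rfl | hj := eq_or_ne j i
  · simpa using hh
  · simpa [hj] using PosSemidef.one

lemma hSum_add (h : Matrix (Fin d) (Fin d) ℂ) (m n : ℕ) :
    hSum h (m + n) = (hSum h m ⊗ₖ 1 + 1 ⊗ₖ hSum h n).submatrix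
      (Fin.appendEquiv m n).symm (Fin.appendEquiv m n).symm := by
  simp only [hSum_eq_sum_prodMat, Fin.sum_univ_add, ← append_const (m := m) (n := n)
    (1 : Matrix (Fin d) (Fin d) ℂ), ← append_update_left, ← append_update_right, prodMat_append,
    prodMat_one]
  ext f g
  simp [Matrix.sum_apply, Finset.sum_mul, Finset.mul_sum]

lemma trace_prodMat_mul_hSum {A : Fin n → Matrix (Fin d) (Fin d) ℂ}
    (hA : ∀ i, (A i).trace = 1) (h : Matrix (Fin d) (Fin d) ℂ) :
    (prodMat A * hSum h n).trace = ∑ i, (A i * h).trace := by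
  rw [hSum_eq_sum_prodMat, Matrix.mul_sum, Matrix.trace_sum]
  refine Finset.sum_congr rfl fun i _ => ?_
  rw [prodMat_mul, trace_prodMat, Finset.prod_eq_single_of_mem i (Finset.mem_univ i),
    Function.update_self]
  intro j _ hj
  rw [Function.update_of_ne hj, Matrix.mul_one, hA j]

lemma trace_sum_smul_prodMat_mul_hSum_re {ι : Type*} [Fintype ι] (p : ι → ℝ)
    {A : ι → Fin n → Matrix (Fin d) (Fin d) ℂ} (hA : ∀ k i, (A k i).trace = 1)
    (h : Matrix (Fin d) (Fin d) ℂ) :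
    ((∑ k, (p k : ℂ) • prodMat (A k)) * hSum h n).trace.re =
      ∑ k, p k * ∑ i, (A k i * h).trace.re := by
  simp only [Matrix.sum_mul, Matrix.smul_mul, Matrix.trace_sum, Matrix.trace_smul, Complex.re_sum,
    smul_eq_mul, Complex.re_ofReal_mul, trace_prodMat_mul_hSum (hA _)]

end Tensor

/-! ### Ergotropy -/

section Ergotropy

variable {m n : Type*} [Fintype m] [DecidableEq m] [Fintype n] [DecidableEq n]

/-- The energy, with respect to `H`, given up by the state `ρ` when it is driven by the unitary
`U`. The ergotropy `ergo ρ H` is its supremum over `U`. -/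
def extractedWork (ρ H : Matrix n n ℂ) (U : Matrix.unitaryGroup n ℂ) : ℝ :=
  (ρ * H).trace.re - ((U : Matrix n n ℂ) * ρ * star (U : Matrix n n ℂ) * H).trace.re

open scoped Matrix.Norms.L2Operator in
lemma bddAbove_range_extractedWork (ρ H : Matrix n n ℂ) :
    BddAbove (Set.range (extractedWork ρ H)) := by
  let energy := (Matrix.traceLinearMap n ℂ ℂ ∘ₗ LinearMap.mulRight ℂ H).toContinuousLinearMap
  refine ⟨(ρ * H).trace.re + ‖energy‖ * ‖ρ‖, Set.forall_mem_range.mpr fun U => ?_⟩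
  have hnorm : ‖(U : Matrix n n ℂ) * ρ * star (U : Matrix n n ℂ)‖ = ‖ρ‖ := by
    rw [← Unitary.coe_star, CStarRing.norm_mul_coe_unitary, CStarRing.norm_coe_unitary_mul]
  have henergy := energy.le_opNorm ((U : Matrix n n ℂ) * ρ * star (U : Matrix n n ℂ))
  rw [hnorm] at henergy
  have hre := neg_le_of_abs_le ((Complex.abs_re_le_norm _).trans henergy)
  exact (sub_le_sub_left hre _).trans_eq (sub_neg_eq_add _ _)

lemma extractedWork_le_ergo (ρ H : Matrix n n ℂ) (U : Matrix.unitaryGroup n ℂ) :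
    extractedWork ρ H U ≤ ergo ρ H :=
  le_ciSup (bddAbove_range_extractedWork ρ H) U

lemma ergo_nonneg (ρ H : Matrix n n ℂ) : 0 ≤ ergo ρ H := by
  simpa [extractedWork] using extractedWork_le_ergo ρ H 1

lemma ergo_le_trace_mul_re {ρ H : Matrix n n ℂ} (hρ : ρ.PosSemidef) (hH : H.PosSemidef) :
    ergo ρ H ≤ (ρ * H).trace.re :=
  ciSup_le fun U => sub_le_self _ <|
    trace_mul_re_nonneg_of_posSemidef (hρ.mul_mul_conjTranspose_same (U : Matrix n n ℂ)) hH

lemma extractedWork_sum_smul {ι : Type*} [Fintype ι] (p : ι → ℝ) (ρ : ι → Matrix n n ℂ)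
    (H : Matrix n n ℂ) (U : Matrix.unitaryGroup n ℂ) :
    extractedWork (∑ k, (p k : ℂ) • ρ k) H U = ∑ k, p k * extractedWork (ρ k) H U := by
  simp only [extractedWork, Matrix.sum_mul, Matrix.mul_sum, Matrix.trace_sum, Matrix.smul_mul,
    Matrix.mul_smul, Matrix.trace_smul, Complex.re_sum, smul_eq_mul, Complex.re_ofReal_mul, mul_sub,
    Finset.sum_sub_distrib]

lemma ergo_sum_smul_le {ι : Type*} [Fintype ι] {p : ι → ℝ} (hp : ∀ k, 0 ≤ p k)
    (ρ : ι → Matrix n n ℂ) (H : Matrix n n ℂ) :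
    ergo (∑ k, (p k : ℂ) • ρ k) H ≤ ∑ k, p k * ergo (ρ k) H := by
  refine ciSup_le fun U => (extractedWork_sum_smul p ρ H U).trans_le ?_
  exact Finset.sum_le_sum fun k _ =>
    mul_le_mul_of_nonneg_left (extractedWork_le_ergo (ρ k) H U) (hp k)

lemma submatrix_equiv_mem_unitaryGroup (e : m ≃ n) (U : Matrix.unitaryGroup n ℂ) :
    (U : Matrix n n ℂ).submatrix e e ∈ Matrix.unitaryGroup m ℂ := by
  rw [Matrix.mem_unitaryGroup_iff, star_eq_conjTranspose, conjTranspose_submatrix,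
    Matrix.submatrix_mul_equiv, ← star_eq_conjTranspose, Matrix.mem_unitaryGroup_iff.mp U.2,
    Matrix.submatrix_one_equiv]

lemma ergo_le_ergo_submatrix_equiv (e : m ≃ n) (ρ H : Matrix n n ℂ) :
    ergo ρ H ≤ ergo (ρ.submatrix e e) (H.submatrix e e) := by
  refine ciSup_le fun U => le_of_eq_of_le ?_
    (extractedWork_le_ergo _ _ ⟨_, submatrix_equiv_mem_unitaryGroup e U⟩)
  simp only [extractedWork, star_eq_conjTranspose, conjTranspose_submatrix,
    Matrix.submatrix_mul_equiv, trace_submatrix_equiv]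

lemma trace_unitary_conj (U : Matrix.unitaryGroup n ℂ) (ρ : Matrix n n ℂ) :
    ((U : Matrix n n ℂ) * ρ * star (U : Matrix n n ℂ)).trace = ρ.trace := by
  rw [Matrix.trace_mul_comm, ← Matrix.mul_assoc, Unitary.coe_star_mul_self, Matrix.one_mul]

lemma extractedWork_kronecker {ρ : Matrix m m ℂ} {τ : Matrix n n ℂ} (hρ : ρ.trace = 1)
    (hτ : τ.trace = 1) (H : Matrix m m ℂ) (K : Matrix n n ℂ) (U : Matrix.unitaryGroup m ℂ)
    (V : Matrix.unitaryGroup n ℂ) :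
    extractedWork (ρ ⊗ₖ τ) (H ⊗ₖ 1 + 1 ⊗ₖ K) ⟨_, kronecker_mem_unitary U.2 V.2⟩ =
      extractedWork ρ H U + extractedWork τ K V := by
  have hU := (trace_unitary_conj U ρ).trans hρ
  have hV := (trace_unitary_conj V τ).trans hτ
  simp only [star_eq_conjTranspose] at hU hV
  simp only [extractedWork, star_eq_conjTranspose, conjTranspose_kronecker, ← mul_kronecker_mul,
    Matrix.mul_add, Matrix.trace_add, trace_kronecker, hU, hV, hρ, hτ, mul_one, one_mul,
    Complex.add_re]
  ring

lemma ergo_add_le_ergo_kronecker {ρ : Matrix m m ℂ} {τ : Matrix n n ℂ} (hρ : ρ.trace = 1)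
    (hτ : τ.trace = 1) (H : Matrix m m ℂ) (K : Matrix n n ℂ) :
    ergo ρ H + ergo τ K ≤ ergo (ρ ⊗ₖ τ) (H ⊗ₖ 1 + 1 ⊗ₖ K) :=
  ciSup_add_ciSup_le fun U V =>
    (extractedWork_kronecker hρ hτ H K U V).symm.trans_le (extractedWork_le_ergo _ _ _)

end Ergotropy

section ProductErgotropy

variable {d m n : ℕ}

lemma ergo_add_le_ergo_prodMat_append {A : Fin m → Matrix (Fin d) (Fin d) ℂ}
    {B : Fin n → Matrix (Fin d) (Fin d) ℂ} (hA : ∀ i, (A i).trace = 1)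
    (hB : ∀ i, (B i).trace = 1) (h : Matrix (Fin d) (Fin d) ℂ) :
    ergo (prodMat A) (hSum h m) + ergo (prodMat B) (hSum h n) ≤
      ergo (prodMat (Fin.append A B)) (hSum h (m + n)) := by
  rw [prodMat_append, hSum_add]
  refine (ergo_add_le_ergo_kronecker ?_ ?_ _ _).trans (ergo_le_ergo_submatrix_equiv _ _ _)
  · rw [trace_prodMat, Finset.prod_eq_one fun i _ => hA i]
  · rw [trace_prodMat, Finset.prod_eq_one fun i _ => hB i]

lemma ergo_prodMat_le {h : Matrix (Fin d) (Fin d) ℂ} (hh : h.PosSemidef)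
    {A : Fin n → Matrix (Fin d) (Fin d) ℂ} (hA : ∀ i, IsDensity (A i)) :
    ergo (prodMat A) (hSum h n) ≤ n * lamMax hh.isHermitian :=
  calc ergo (prodMat A) (hSum h n) ≤ (prodMat A * hSum h n).trace.re :=
        ergo_le_trace_mul_re (isDensity_prodMat hA).1 (posSemidef_hSum hh n)
    _ = ∑ i, (A i * h).trace.re := by
        rw [trace_prodMat_mul_hSum fun i => (hA i).2, Complex.re_sum]
    _ ≤ ∑ _i : Fin n, lamMax hh.isHermitian :=
        Finset.sum_le_sum fun i _ => (hA i).trace_mul_re_le_lamMax hh.isHermitian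
    _ = n * lamMax hh.isHermitian := by simp

end ProductErgotropy

/-! ### Superadditive sequences and total ergotropy -/

section Superadditive

variable {u : ℕ → ℝ}

lemma tendsto_div_iSup_of_superadditive (hu : ∀ m n, u m + u n ≤ u (m + n))
    (hb : BddAbove (Set.range fun N : ℕ+ => u N / (N : ℕ))) :
    Tendsto (fun n => u n / n) atTop (𝓝 (⨆ N : ℕ+, u N / (N : ℕ))) := by
  have hsub : Subadditive fun n => -u n := fun m n => by linarith [hu m n]
  refine tendsto_order.2 ⟨fun c hc => ?_, fun c hc => ?_⟩
  · obtain ⟨N, hN⟩ := exists_lt_of_lt_ciSup hc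
    have hlt : -u N / (N : ℕ) < -c := by rwa [neg_div, neg_lt_neg_iff]
    filter_upwards [hsub.eventually_div_lt_of_div_lt N.ne_zero hlt] with n hn
    rwa [neg_div, neg_lt_neg_iff] at hn
  · filter_upwards [eventually_gt_atTop 0] with n hn
    exact (le_ciSup hb ⟨n, hn⟩).trans_lt hc

lemma tendsto_floor_mul_div {L p : ℝ} (hu : Tendsto (fun n => u n / n) atTop (𝓝 L))
    (hp : 0 ≤ p) : Tendsto (fun n : ℕ => u ⌊p * n⌋₊ / n) atTop (𝓝 (p * L)) := by
  obtain rfl | hp := hp.eq_or_lt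
  · simpa using tendsto_const_div_atTop_nhds_zero_nat (u 0)
  have hfloor : Tendsto (fun n : ℕ => ⌊p * (n : ℝ)⌋₊) atTop atTop :=
    tendsto_nat_floor_atTop.comp (tendsto_natCast_atTop_atTop.const_mul_atTop hp)
  have hratio : Tendsto (fun n : ℕ => (⌊p * n⌋₊ : ℝ) / n) atTop (𝓝 p) :=
    (tendsto_nat_floor_mul_div_atTop hp.le).comp tendsto_natCast_atTop_atTop
  refine (hratio.mul (hu.comp hfloor)).congr' ?_
  filter_upwards [hfloor.eventually_ne_atTop 0] with n hn
  have hn' : (⌊p * n⌋₊ : ℝ) ≠ 0 := by exact_mod_cast hn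
  simp only [Function.comp_apply]
  rw [mul_comm, div_mul_div_cancel₀ hn']

end Superadditive

section TotalErgotropy

variable {d : ℕ} {σ h : Matrix (Fin d) (Fin d) ℂ}

lemma ergo_tpow_div_le_lamMax (hh : h.PosSemidef) (hσ : IsDensity σ) (n : ℕ) :
    ergo (tpow σ n) (hSum h n) / n ≤ lamMax hh.isHermitian :=
  div_le_of_le_mul₀ n.cast_nonneg (lamMax_nonneg hh) <|
    (ergo_prodMat_le hh fun _ => hσ).trans_eq (mul_comm _ _)

lemma bddAbove_range_ergo_tpow_div (hh : h.PosSemidef) (hσ : IsDensity σ) :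
    BddAbove (Set.range fun N : ℕ+ => ergo (tpow σ N) (hSum h N) / (N : ℕ)) :=
  ⟨lamMax hh.isHermitian, Set.forall_mem_range.mpr fun N => ergo_tpow_div_le_lamMax hh hσ N⟩

lemma Etot_le_lamMax (hh : h.PosSemidef) (hσ : IsDensity σ) : Etot σ h ≤ lamMax hh.isHermitian :=
  ciSup_le fun N => ergo_tpow_div_le_lamMax hh hσ N

lemma Etot_nonneg (σ h : Matrix (Fin d) (Fin d) ℂ) : 0 ≤ Etot σ h :=
  Real.iSup_nonneg fun _ => div_nonneg (ergo_nonneg _ _) (Nat.cast_nonneg _)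

lemma ergo_tpow_le_mul_Etot (hh : h.PosSemidef) (hσ : IsDensity σ) {n : ℕ} (hn : 0 < n) :
    ergo (tpow σ n) (hSum h n) ≤ n * Etot σ h :=
  (div_le_iff₀' (Nat.cast_pos.mpr hn)).mp
    (le_ciSup (bddAbove_range_ergo_tpow_div hh hσ) ⟨n, hn⟩)

lemma ergo_tpow_add_le (hσ : σ.trace = 1) (h : Matrix (Fin d) (Fin d) ℂ) (m n : ℕ) :
    ergo (tpow σ m) (hSum h m) + ergo (tpow σ n) (hSum h n) ≤
      ergo (tpow σ (m + n)) (hSum h (m + n)) := by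
  simpa only [tpow_eq_prodMat, append_const] using
    ergo_add_le_ergo_prodMat_append (m := m) (n := n) (fun _ => hσ) (fun _ => hσ) h

lemma tendsto_ergo_tpow_div (hh : h.PosSemidef) (hσ : IsDensity σ) :
    Tendsto (fun n : ℕ => ergo (tpow σ n) (hSum h n) / n) atTop (𝓝 (Etot σ h)) :=
  tendsto_div_iSup_of_superadditive (ergo_tpow_add_le hσ.2 h) (bddAbove_range_ergo_tpow_div hh hσ)

end TotalErgotropy

/-! ### Energy-constrained capacities -/

section Capacities

variable {d : ℕ} {h : Matrix (Fin d) (Fin d) ℂ}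
  {Λ : Matrix (Fin d) (Fin d) ℂ →ₗ[ℂ] Matrix (Fin d) (Fin d) ℂ}

lemma Etot_le_E1tot (hh : h.PosSemidef) (hΛ : ∀ ρ, IsDensity ρ → IsDensity (Λ ρ))
    {ρ : Matrix (Fin d) (Fin d) ℂ} (hρ : IsDensity ρ) {e : ℝ} (he : (ρ * h).trace.re ≤ e) :
    Etot (Λ ρ) h ≤ E1tot Λ h e := by
  refine le_csSup ⟨lamMax hh.isHermitian, ?_⟩ ⟨ρ, hρ, he, rfl⟩
  rintro _ ⟨τ, hτ, -, rfl⟩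
  exact Etot_le_lamMax hh (hΛ τ hτ)

lemma E1tot_nonneg (Λ : Matrix (Fin d) (Fin d) ℂ →ₗ[ℂ] Matrix (Fin d) (Fin d) ℂ)
    (h : Matrix (Fin d) (Fin d) ℂ) (e : ℝ) : 0 ≤ E1tot Λ h e := by
  refine Real.sSup_nonneg ?_
  rintro _ ⟨τ, -, -, rfl⟩
  exact Etot_nonneg _ _

lemma E1tot_le_lamMax (hh : h.PosSemidef) (hΛ : ∀ ρ, IsDensity ρ → IsDensity (Λ ρ)) (e : ℝ) :
    E1tot Λ h e ≤ lamMax hh.isHermitian := by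
  refine Real.sSup_le ?_ (lamMax_nonneg hh)
  rintro _ ⟨τ, hτ, -, rfl⟩
  exact Etot_le_lamMax hh (hΛ τ hτ)

lemma chiTot_nonneg (Λ : Matrix (Fin d) (Fin d) ℂ →ₗ[ℂ] Matrix (Fin d) (Fin d) ℂ)
    (h : Matrix (Fin d) (Fin d) ℂ) (l e : ℝ) : 0 ≤ chiTot Λ h l e := by
  refine Real.sSup_nonneg ?_
  rintro _ ⟨m, q, f, hq, -, -, -, rfl⟩
  exact Finset.sum_nonneg fun j _ => mul_nonneg (hq j) (E1tot_nonneg Λ h (f j))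

lemma sum_mul_E1tot_le_chiTot (hh : h.PosSemidef) (hΛ : ∀ ρ, IsDensity ρ → IsDensity (Λ ρ))
    {ι : Type*} [Fintype ι] {p ev : ι → ℝ} {l e : ℝ} (hp : ∀ j, 0 ≤ p j) (hp1 : ∑ j, p j = 1)
    (hev : ∀ j, ev j ∈ Set.Icc 0 l) (he : ∑ j, p j * ev j ≤ e) :
    ∑ j, p j * E1tot Λ h (ev j) ≤ chiTot Λ h l e := by
  refine le_csSup ⟨lamMax hh.isHermitian, ?_⟩ ?_
  · rintro _ ⟨m, q, f, hq, hq1, -, -, rfl⟩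
    calc ∑ j, q j * E1tot Λ h (f j) ≤ ∑ j, q j * lamMax hh.isHermitian :=
          Finset.sum_le_sum fun j _ =>
            mul_le_mul_of_nonneg_left (E1tot_le_lamMax hh hΛ (f j)) (hq j)
      _ = lamMax hh.isHermitian := by rw [← Finset.sum_mul, hq1, one_mul]
  · let idx := (Fintype.equivFin ι).symm
    exact ⟨Fintype.card ι, p ∘ idx, ev ∘ idx, fun j => hp (idx j), (idx.sum_comp p).trans hp1,
      fun j => hev (idx j), (idx.sum_comp fun j => p j * ev j).trans_le he,
      (idx.sum_comp fun j => p j * E1tot Λ h (ev j)).symm⟩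

end Capacities

/-! ### The upper bound -/

section UpperBound

variable {d n : ℕ} {h : Matrix (Fin d) (Fin d) ℂ}
  {Λ : Matrix (Fin d) (Fin d) ℂ →ₗ[ℂ] Matrix (Fin d) (Fin d) ℂ}
  {Λn : Matrix (Fin n → Fin d) (Fin n → Fin d) ℂ →ₗ[ℂ] Matrix (Fin n → Fin d) (Fin n → Fin d) ℂ}
  {ρ : Matrix (Fin n → Fin d) (Fin n → Fin d) ℂ}

lemma SepState.exists_eq_sum_pure (hρ : SepState ρ) :
    ∃ (ι : Type) (_ : Fintype ι) (p : ι → ℝ) (ψ : ι → Fin n → Fin d → ℂ),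
      (∀ k, 0 ≤ p k) ∧ ∑ k, p k = 1 ∧ (∀ k i, star (ψ k i) ⬝ᵥ ψ k i = 1) ∧
      ρ = ∑ k, (p k : ℂ) • prodMat fun i => vecMulVec (ψ k i) (star (ψ k i)) := by
  obtain ⟨m, p, σs, hp, hp1, hσ, rfl⟩ := hρ
  choose w v hw hw1 hv hdec using fun k i => (hσ k i).exists_eq_sum_pure
  refine ⟨Fin m × (Fin n → Fin d), inferInstance, fun x => p x.1 * ∏ i, w x.1 i (x.2 i),
    fun x i => v x.1 i (x.2 i), fun x => mul_nonneg (hp _) (Finset.prod_nonneg fun i _ => hw _ _ _),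
    ?_, fun x i => hv _ _ _, ?_⟩
  · simp only [Fintype.sum_prod_type, ← Finset.mul_sum, ← Fintype.prod_sum, hw1,
      Finset.prod_const_one, mul_one, hp1]
  · have hpure (k : Fin m) : prodMat (σs k) = ∑ c : Fin n → Fin d,
        (∏ i, (w k i (c i) : ℂ)) • prodMat fun i => vecMulVec (v k i (c i)) (star (v k i (c i))) :=
      (congrArg prodMat (funext (hdec k))).trans (prodMat_sum_smul _ _)
    simp only [hpure, Fintype.sum_prod_type, Finset.smul_sum, smul_smul, Complex.ofReal_mul,
      Complex.ofReal_prod]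

lemma SepState.map (hρ : SepState ρ) (hΛ : ∀ ρ, IsDensity ρ → IsDensity (Λ ρ))
    (hΛn : ∀ ρs, Λn (prodMat ρs) = prodMat fun i => Λ (ρs i)) : SepState (Λn ρ) := by
  obtain ⟨m, p, σs, hp, hp1, hσ, rfl⟩ := hρ
  exact ⟨m, p, fun k i => Λ (σs k i), hp, hp1, fun k i => hΛ _ (hσ k i), by
    simp only [map_sum, map_smul, hΛn]⟩

lemma SepState.ergo_hSum_le (hρ : SepState ρ) (hh : h.PosSemidef) :
    ergo ρ (hSum h n) ≤ n * lamMax hh.isHermitian := by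
  obtain ⟨m, p, σs, hp, hp1, hσ, rfl⟩ := hρ
  calc ergo (∑ k, (p k : ℂ) • prodMat (σs k)) (hSum h n)
      ≤ ∑ k, p k * ergo (prodMat (σs k)) (hSum h n) := ergo_sum_smul_le hp _ _
    _ ≤ ∑ k, p k * (n * lamMax hh.isHermitian) := Finset.sum_le_sum fun k _ =>
        mul_le_mul_of_nonneg_left (ergo_prodMat_le hh (hσ k)) (hp k)
    _ = n * lamMax hh.isHermitian := by rw [← Finset.sum_mul, hp1, one_mul]

/-- Mean energy per site, under the single-site Hamiltonian `h`, of the product state with unit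
vectors `ψ i`; it is `0` when there are no sites. -/
def meanEnergy (h : Matrix (Fin d) (Fin d) ℂ) (ψ : Fin n → Fin d → ℂ) : ℝ :=
  (∑ i, (star (ψ i) ⬝ᵥ h *ᵥ ψ i).re) / n

lemma meanEnergy_mem_Icc (hh : h.PosSemidef) {ψ : Fin n → Fin d → ℂ}
    (hψ : ∀ i, star (ψ i) ⬝ᵥ ψ i = 1) : meanEnergy h ψ ∈ Set.Icc 0 (lamMax hh.isHermitian) := by
  refine ⟨div_nonneg (Finset.sum_nonneg fun i _ => hh.re_dotProduct_nonneg (ψ i)) n.cast_nonneg,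
    div_le_of_le_mul₀ n.cast_nonneg (lamMax_nonneg hh) ?_⟩
  calc ∑ i, (star (ψ i) ⬝ᵥ h *ᵥ ψ i).re ≤ ∑ _i : Fin n, lamMax hh.isHermitian := by
        refine Finset.sum_le_sum fun i _ => ?_
        rw [← trace_vecMulVec_star_mul]
        exact (isDensity_vecMulVec_star (hψ i)).trace_mul_re_le_lamMax hh.isHermitian
    _ = lamMax hh.isHermitian * n := by simp [mul_comm]

lemma trace_sum_smul_pure_mul_hSum_re (hn : 0 < n) {ι : Type*} [Fintype ι] (p : ι → ℝ)
    {ψ : ι → Fin n → Fin d → ℂ} (hψ : ∀ k i, star (ψ k i) ⬝ᵥ ψ k i = 1)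
    (h : Matrix (Fin d) (Fin d) ℂ) :
    ((∑ k, (p k : ℂ) • prodMat fun i => vecMulVec (ψ k i) (star (ψ k i))) * hSum h n).trace.re =
      n * ∑ k, p k * meanEnergy h (ψ k) := by
  rw [trace_sum_smul_prodMat_mul_hSum_re p fun k i => (isDensity_vecMulVec_star (hψ k i)).2,
    Finset.mul_sum]
  refine Finset.sum_congr rfl fun k _ => ?_
  simp only [trace_vecMulVec_star_mul, meanEnergy]
  field_simp

lemma ergo_map_pure_le_mul_E1tot (hh : h.PosSemidef) (hΛ : ∀ ρ, IsDensity ρ → IsDensity (Λ ρ))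
    (hn : 0 < n)
    (hiid : ∀ e ∈ Set.Icc 0 (lamMax hh.isHermitian), ∃ σ, IsDensity σ ∧ (σ * h).trace.re ≤ e ∧
      ∀ ψ : Fin n → Fin d → ℂ, (∀ i, star (ψ i) ⬝ᵥ ψ i = 1) →
        ∑ i, (star (ψ i) ⬝ᵥ h *ᵥ ψ i).re ≤ n * e →
        ergo (Λn (prodMat fun i => vecMulVec (ψ i) (star (ψ i)))) (hSum h n) ≤
          ergo (tpow (Λ σ) n) (hSum h n))
    {ψ : Fin n → Fin d → ℂ} (hψ : ∀ i, star (ψ i) ⬝ᵥ ψ i = 1) :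
    ergo (Λn (prodMat fun i => vecMulVec (ψ i) (star (ψ i)))) (hSum h n) ≤
      n * E1tot Λ h (meanEnergy h ψ) := by
  have hn' : (n : ℝ) ≠ 0 := Nat.cast_ne_zero.mpr hn.ne'
  obtain ⟨σ, hσ, hσe, hσψ⟩ := hiid _ (meanEnergy_mem_Icc hh hψ)
  calc ergo (Λn (prodMat fun i => vecMulVec (ψ i) (star (ψ i)))) (hSum h n)
      ≤ ergo (tpow (Λ σ) n) (hSum h n) := hσψ ψ hψ (mul_div_cancel₀ _ hn').ge
    _ ≤ n * Etot (Λ σ) h := ergo_tpow_le_mul_Etot hh (hΛ σ hσ) hn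
    _ ≤ n * E1tot Λ h (meanEnergy h ψ) :=
        mul_le_mul_of_nonneg_left (Etot_le_E1tot hh hΛ hσ hσe) n.cast_nonneg

lemma SepState.ergo_map_le_mul_chiTot (hρ : SepState ρ) (hh : h.PosSemidef)
    (hΛ : ∀ ρ, IsDensity ρ → IsDensity (Λ ρ)) (hn : 0 < n)
    (hopt : ∀ ψ : Fin n → Fin d → ℂ, (∀ i, star (ψ i) ⬝ᵥ ψ i = 1) →
      ergo (Λn (prodMat fun i => vecMulVec (ψ i) (star (ψ i)))) (hSum h n) ≤
        n * E1tot Λ h (meanEnergy h ψ))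
    {e : ℝ} (he : (ρ * hSum h n).trace.re ≤ n * e) :
    ergo (Λn ρ) (hSum h n) ≤ n * chiTot Λ h (lamMax hh.isHermitian) e := by
  have hn' : (0 : ℝ) < n := Nat.cast_pos.mpr hn
  obtain ⟨ι, _, p, ψ, hp, hp1, hψ, rfl⟩ := hρ.exists_eq_sum_pure
  rw [trace_sum_smul_pure_mul_hSum_re hn p hψ] at he
  calc ergo (Λn (∑ k, (p k : ℂ) • prodMat fun i => vecMulVec (ψ k i) (star (ψ k i)))) (hSum h n)
      ≤ ∑ k, p k * ergo (Λn (prodMat fun i => vecMulVec (ψ k i) (star (ψ k i)))) (hSum h n) := by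
        simp only [map_sum, map_smul]
        exact ergo_sum_smul_le hp _ _
    _ ≤ ∑ k, p k * (n * E1tot Λ h (meanEnergy h (ψ k))) := Finset.sum_le_sum fun k _ =>
        mul_le_mul_of_nonneg_left (hopt (ψ k) (hψ k)) (hp k)
    _ = n * ∑ k, p k * E1tot Λ h (meanEnergy h (ψ k)) := by
        simp only [Finset.mul_sum, mul_left_comm]
    _ ≤ n * chiTot Λ h (lamMax hh.isHermitian) e :=
        mul_le_mul_of_nonneg_left (sum_mul_E1tot_le_chiTot hh hΛ hp hp1
          (fun k => meanEnergy_mem_Icc hh (hψ k)) (le_of_mul_le_mul_left he hn')) hn'.le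

end UpperBound

section SeparableCapacity

variable {d n : ℕ} {h : Matrix (Fin d) (Fin d) ℂ}
  {Λ : Matrix (Fin d) (Fin d) ℂ →ₗ[ℂ] Matrix (Fin d) (Fin d) ℂ}
  {Λfam : ∀ n : ℕ, Matrix (Fin n → Fin d) (Fin n → Fin d) ℂ →ₗ[ℂ]
    Matrix (Fin n → Fin d) (Fin n → Fin d) ℂ}

lemma EsepN_div_le_chiTot (hh : h.PosSemidef) (hΛ : ∀ ρ, IsDensity ρ → IsDensity (Λ ρ))
    (hn : 0 < n)
    (hopt : ∀ ψ : Fin n → Fin d → ℂ, (∀ i, star (ψ i) ⬝ᵥ ψ i = 1) →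
      ergo (Λfam n (prodMat fun i => vecMulVec (ψ i) (star (ψ i)))) (hSum h n) ≤
        n * E1tot Λ h (meanEnergy h ψ)) (e : ℝ) :
    EsepN Λfam h n (n * e) / n ≤ chiTot Λ h (lamMax hh.isHermitian) e := by
  rw [div_le_iff₀' (Nat.cast_pos.mpr hn)]
  refine Real.sSup_le ?_ (mul_nonneg n.cast_nonneg (chiTot_nonneg _ _ _ _))
  rintro _ ⟨ρ, -, hsep, he, rfl⟩
  exact hsep.ergo_map_le_mul_chiTot hh hΛ hn hopt he

lemma ergo_map_prodMat_le_EsepN (hh : h.PosSemidef) (hΛ : ∀ ρ, IsDensity ρ → IsDensity (Λ ρ))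
    (hΛn : ∀ ρs, Λfam n (prodMat ρs) = prodMat fun i => Λ (ρs i))
    {A : Fin n → Matrix (Fin d) (Fin d) ℂ} (hA : ∀ i, IsDensity (A i)) {E : ℝ}
    (hE : ∑ i, (A i * h).trace.re ≤ E) :
    ergo (prodMat fun i => Λ (A i)) (hSum h n) ≤ EsepN Λfam h n E := by
  refine le_csSup ⟨n * lamMax hh.isHermitian, ?_⟩ ⟨prodMat A, isDensity_prodMat hA,
    ⟨1, fun _ => 1, fun _ => A, by simp, by simp, fun _ => hA, by simp⟩, ?_, by rw [hΛn]⟩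
  · rintro _ ⟨ρ, -, hsep, -, rfl⟩
    exact (hsep.map hΛ hΛn).ergo_hSum_le hh
  · rwa [trace_prodMat_mul_hSum fun i => (hA i).2, Complex.re_sum]

end SeparableCapacity

/-! ### The lower bound: time sharing -/

/-- Some product state on `n` sites with total energy at most `E` is sent by `Λ` on every site to
a state of ergotropy at least `x`. -/
def IsAttainable {d : ℕ} (Λ : Matrix (Fin d) (Fin d) ℂ →ₗ[ℂ] Matrix (Fin d) (Fin d) ℂ)
    (h : Matrix (Fin d) (Fin d) ℂ) (n : ℕ) (E x : ℝ) : Prop :=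
  ∃ A : Fin n → Matrix (Fin d) (Fin d) ℂ, (∀ i, IsDensity (A i)) ∧
    ∑ i, (A i * h).trace.re ≤ E ∧ x ≤ ergo (prodMat fun i => Λ (A i)) (hSum h n)

section TimeSharing

variable {d m n : ℕ} {h : Matrix (Fin d) (Fin d) ℂ}
  {Λ : Matrix (Fin d) (Fin d) ℂ →ₗ[ℂ] Matrix (Fin d) (Fin d) ℂ} {E F x y : ℝ}

lemma IsAttainable.mono (hE : IsAttainable Λ h n E x) (hEF : E ≤ F) (hyx : y ≤ x) :
    IsAttainable Λ h n F y := by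
  obtain ⟨A, hA, hAE, hAx⟩ := hE
  exact ⟨A, hA, hAE.trans hEF, hyx.trans hAx⟩

lemma isAttainable_zero (Λ : Matrix (Fin d) (Fin d) ℂ →ₗ[ℂ] Matrix (Fin d) (Fin d) ℂ)
    (h : Matrix (Fin d) (Fin d) ℂ) : IsAttainable Λ h 0 0 0 :=
  ⟨Fin.elim0, fun i => i.elim0, by simp, ergo_nonneg _ _⟩

lemma isAttainable_tpow (Λ : Matrix (Fin d) (Fin d) ℂ →ₗ[ℂ] Matrix (Fin d) (Fin d) ℂ)
    (h : Matrix (Fin d) (Fin d) ℂ) {ρ : Matrix (Fin d) (Fin d) ℂ} (hρ : IsDensity ρ) (n : ℕ) :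
    IsAttainable Λ h n (n * (ρ * h).trace.re) (ergo (tpow (Λ ρ) n) (hSum h n)) :=
  ⟨fun _ => ρ, fun _ => hρ, by simp, le_rfl⟩

lemma IsAttainable.add (hΛ : ∀ ρ, IsDensity ρ → IsDensity (Λ ρ))
    (hE : IsAttainable Λ h m E x) (hF : IsAttainable Λ h n F y) :
    IsAttainable Λ h (m + n) (E + F) (x + y) := by
  obtain ⟨A, hA, hAE, hAx⟩ := hE
  obtain ⟨B, hB, hBF, hBy⟩ := hF
  refine ⟨Fin.append A B, forall_append hA hB, ?_, ?_⟩
  · simpa [Fin.sum_univ_add] using add_le_add hAE hBF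
  · have hmap : (fun i => Λ (Fin.append A B i)) =
        Fin.append (fun i => Λ (A i)) (fun i => Λ (B i)) := by
      funext i
      cases i using Fin.addCases <;> simp
    rw [hmap]
    exact (add_le_add hAx hBy).trans (ergo_add_le_ergo_prodMat_append
      (fun i => (hΛ _ (hA i)).2) (fun i => (hΛ _ (hB i)).2) h)

lemma IsAttainable.sum (hΛ : ∀ ρ, IsDensity ρ → IsDensity (Λ ρ)) {ι : Type*} (s : Finset ι)
    {N : ι → ℕ} {E x : ι → ℝ} (hE : ∀ j ∈ s, IsAttainable Λ h (N j) (E j) (x j)) :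
    IsAttainable Λ h (∑ j ∈ s, N j) (∑ j ∈ s, E j) (∑ j ∈ s, x j) := by
  classical
  induction s using Finset.induction_on with
  | empty => exact isAttainable_zero Λ h
  | insert j s hj ih =>
    simp only [Finset.sum_insert hj]
    exact (hE j (Finset.mem_insert_self j s)).add hΛ
      (ih fun k hk => hE k (Finset.mem_insert_of_mem hk))

lemma sum_floor_mul_le {ι : Type*} [Fintype ι] {p : ι → ℝ} (hp : ∀ j, 0 ≤ p j)
    (hp1 : ∑ j, p j = 1) (n : ℕ) : ∑ j, ⌊p j * n⌋₊ ≤ n := by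
  rw [← Nat.cast_le (α := ℝ), Nat.cast_sum]
  calc ∑ j, (⌊p j * n⌋₊ : ℝ) ≤ ∑ j, p j * n :=
        Finset.sum_le_sum fun j _ => Nat.floor_le (mul_nonneg (hp j) n.cast_nonneg)
    _ = n := by rw [← Finset.sum_mul, hp1, one_mul]

lemma isAttainable_timeSharing (hh : h.PosSemidef) (hΛ : ∀ ρ, IsDensity ρ → IsDensity (Λ ρ))
    {σ₀ : Matrix (Fin d) (Fin d) ℂ} (hσ₀ : IsDensity σ₀) (hσ₀h : (σ₀ * h).trace.re ≤ 0)
    {ι : Type*} [Fintype ι] {p : ι → ℝ} (hp : ∀ j, 0 ≤ p j) (hp1 : ∑ j, p j = 1)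
    {ρ : ι → Matrix (Fin d) (Fin d) ℂ} (hρ : ∀ j, IsDensity (ρ j)) (n : ℕ) :
    IsAttainable Λ h n (n * ∑ j, p j * (ρ j * h).trace.re)
      (∑ j, ergo (tpow (Λ (ρ j)) ⌊p j * n⌋₊) (hSum h ⌊p j * n⌋₊)) := by
  have hblocks := IsAttainable.sum hΛ Finset.univ
    fun j _ => isAttainable_tpow Λ h (hρ j) ⌊p j * n⌋₊
  have hall := hblocks.add hΛ (isAttainable_tpow Λ h hσ₀ (n - ∑ j, ⌊p j * n⌋₊))
  rw [Nat.add_sub_cancel' (sum_floor_mul_le hp hp1 n)] at hall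
  refine hall.mono ?_ (le_add_of_nonneg_right (ergo_nonneg _ _))
  have hfiller : ((n - ∑ j, ⌊p j * n⌋₊ : ℕ) : ℝ) * (σ₀ * h).trace.re ≤ 0 :=
    mul_nonpos_of_nonneg_of_nonpos (Nat.cast_nonneg _) hσ₀h
  calc _ ≤ ∑ j, (⌊p j * n⌋₊ : ℝ) * (ρ j * h).trace.re := add_le_of_nonpos_right hfiller
    _ ≤ ∑ j, p j * n * (ρ j * h).trace.re := Finset.sum_le_sum fun j _ =>
        mul_le_mul_of_nonneg_right (Nat.floor_le (mul_nonneg (hp j) n.cast_nonneg))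
          (trace_mul_re_nonneg_of_posSemidef (hρ j).1 hh)
    _ = n * ∑ j, p j * (ρ j * h).trace.re := by
        rw [Finset.mul_sum]
        exact Finset.sum_congr rfl fun j _ => by ring

lemma exists_lt_Etot_of_lt_E1tot {e c : ℝ} (hc : c < E1tot Λ h e)
    (hfeas : ∃ σ, IsDensity σ ∧ (σ * h).trace.re ≤ e) :
    ∃ ρ, IsDensity ρ ∧ (ρ * h).trace.re ≤ e ∧ c < Etot (Λ ρ) h := by
  obtain ⟨σ, hσ, hσe⟩ := hfeas
  obtain ⟨_, ⟨ρ, hρ, hρe, rfl⟩, hlt⟩ := exists_lt_of_lt_csSup (by exact ⟨_, σ, hσ, hσe, rfl⟩) hc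
  exact ⟨ρ, hρ, hρe, hlt⟩

lemma exists_ensemble_of_lt_chiTot {c l e : ℝ} (hc : c < chiTot Λ h l e) (hl : 0 ≤ l)
    (he : 0 ≤ e) (hground : ∃ σ, IsDensity σ ∧ (σ * h).trace.re ≤ 0) :
    ∃ (m : ℕ) (p : Fin m → ℝ) (ρ : Fin m → Matrix (Fin d) (Fin d) ℂ),
      (∀ j, 0 ≤ p j) ∧ ∑ j, p j = 1 ∧ (∀ j, IsDensity (ρ j)) ∧
      ∑ j, p j * (ρ j * h).trace.re ≤ e ∧ c < ∑ j, p j * Etot (Λ (ρ j)) h := by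
  obtain ⟨_, ⟨m, p, ev, hp, hp1, hev, hpe, rfl⟩, hlt⟩ := exists_lt_of_lt_csSup
    (by exact ⟨_, 1, fun _ => 1, fun _ => 0, by simp, by simp, by simp [hl], by simpa, rfl⟩) hc
  obtain ⟨ε, hε, hcε⟩ : ∃ ε > 0, c < ∑ j, p j * E1tot Λ h (ev j) - ε :=
    ⟨(∑ j, p j * E1tot Λ h (ev j) - c) / 2, by linarith, by linarith⟩
  obtain ⟨σ₀, hσ₀, hσ₀h⟩ := hground
  choose ρ hρ hρe hρx using fun j => exists_lt_Etot_of_lt_E1tot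
    (sub_lt_self (E1tot Λ h (ev j)) hε) ⟨σ₀, hσ₀, hσ₀h.trans (hev j).1⟩
  refine ⟨m, p, ρ, hp, hp1, hρ, ?_, ?_⟩
  · exact (Finset.sum_le_sum fun j _ => mul_le_mul_of_nonneg_left (hρe j) (hp j)).trans hpe
  · calc c < ∑ j, p j * E1tot Λ h (ev j) - ε := hcε
      _ = ∑ j, p j * (E1tot Λ h (ev j) - ε) := by
          simp only [mul_sub, Finset.sum_sub_distrib, ← Finset.sum_mul, hp1, one_mul]
      _ ≤ ∑ j, p j * Etot (Λ (ρ j)) h :=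
          Finset.sum_le_sum fun j _ => mul_le_mul_of_nonneg_left (hρx j).le (hp j)

variable {Λfam : ∀ n : ℕ, Matrix (Fin n → Fin d) (Fin n → Fin d) ℂ →ₗ[ℂ]
    Matrix (Fin n → Fin d) (Fin n → Fin d) ℂ}

lemma IsAttainable.le_EsepN (hE : IsAttainable Λ h n E x) (hh : h.PosSemidef)
    (hΛ : ∀ ρ, IsDensity ρ → IsDensity (Λ ρ))
    (hΛn : ∀ ρs, Λfam n (prodMat ρs) = prodMat fun i => Λ (ρs i)) : x ≤ EsepN Λfam h n E := by
  obtain ⟨A, hA, hAE, hAx⟩ := hE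
  exact hAx.trans (ergo_map_prodMat_le_EsepN hh hΛ hΛn hA hAE)

lemma eventually_lt_EsepN_div (hh : h.PosSemidef) (hΛ : ∀ ρ, IsDensity ρ → IsDensity (Λ ρ))
    (hΛfam : ∀ n ρs, Λfam n (prodMat ρs) = prodMat fun i => Λ (ρs i)) {c l e : ℝ}
    (hc : c < chiTot Λ h l e) (hl : 0 ≤ l) (he : 0 ≤ e)
    (hground : ∃ σ, IsDensity σ ∧ (σ * h).trace.re ≤ 0) :
    ∀ᶠ n : ℕ in atTop, c < EsepN Λfam h n (n * e) / n := by
  obtain ⟨m, p, ρ, hp, hp1, hρ, hρe, hcρ⟩ := exists_ensemble_of_lt_chiTot hc hl he hground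
  obtain ⟨σ₀, hσ₀, hσ₀h⟩ := hground
  have hlim := tendsto_finsetSum Finset.univ fun j _ =>
    tendsto_floor_mul_div (tendsto_ergo_tpow_div hh (hΛ _ (hρ j))) (hp j)
  filter_upwards [hlim.eventually_const_lt hcρ] with n hn
  rw [← Finset.sum_div] at hn
  refine hn.trans_le (div_le_div_of_nonneg_right ?_ n.cast_nonneg)
  exact ((isAttainable_timeSharing hh hΛ hσ₀ hσ₀h hp hp1 hρ n).mono
    (mul_le_mul_of_nonneg_left hρe n.cast_nonneg) le_rfl).le_EsepN hh hΛ (hΛfam n)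

end TimeSharing

theorem statement14_general {d : ℕ}
    (Λ : Matrix (Fin d) (Fin d) ℂ →ₗ[ℂ] Matrix (Fin d) (Fin d) ℂ)
    (hΛ : ∀ ρ, IsDensity ρ → IsDensity (Λ ρ))
    (h : Matrix (Fin d) (Fin d) ℂ) (hps : h.PosSemidef)
    (Λfam : ∀ n : ℕ, Matrix (Fin n → Fin d) (Fin n → Fin d) ℂ →ₗ[ℂ]
      Matrix (Fin n → Fin d) (Fin n → Fin d) ℂ)
    (hΛfam : ∀ (n : ℕ) (ρs : Fin n → Matrix (Fin d) (Fin d) ℂ),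
      Λfam n (prodMat ρs) = prodMat fun i => Λ (ρs i))
    (hground : ∃ σ, IsDensity σ ∧ (σ * h).trace.re ≤ 0)
    (hopt : ∀ᶠ n : ℕ in atTop, ∀ ψ : Fin n → Fin d → ℂ, (∀ i, star (ψ i) ⬝ᵥ ψ i = 1) →
      ergo (Λfam n (prodMat fun i => vecMulVec (ψ i) (star (ψ i)))) (hSum h n) ≤
        n * E1tot Λ h (meanEnergy h ψ))
    {𝔢 : ℝ} (h𝔢 : 0 ≤ 𝔢) :
    Tendsto (fun n : ℕ => EsepN Λfam h n (n * 𝔢) / n) atTop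
      (𝓝 (chiTot Λ h (lamMax hps.isHermitian) 𝔢)) := by
  refine tendsto_order.2 ⟨fun c hc => ?_, fun c hc => ?_⟩
  · exact eventually_lt_EsepN_div hps hΛ hΛfam hc (lamMax_nonneg hps) h𝔢 hground
  · filter_upwards [hopt, eventually_gt_atTop 0] with n hn hpos
    exact (EsepN_div_le_chiTot hps hΛ hpos hn 𝔢).trans_lt hc

theorem statement14 {d : ℕ} (hd : 0 < d)
    (Λ : Matrix (Fin d) (Fin d) ℂ →ₗ[ℂ] Matrix (Fin d) (Fin d) ℂ) (hΛ : IsChannel Λ)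
    (h : Matrix (Fin d) (Fin d) ℂ) (hps : h.PosSemidef)
    (Λfam : ∀ n : ℕ, Matrix (Fin n → Fin d) (Fin n → Fin d) ℂ →ₗ[ℂ]
      Matrix (Fin n → Fin d) (Fin n → Fin d) ℂ)
    (hΛfam : ∀ (n : ℕ) (ρs : Fin n → Matrix (Fin d) (Fin d) ℂ),
      Λfam n (prodMat ρs) = prodMat fun i => Λ (ρs i))
    (𝔢 : ℝ) (h𝔢 : 𝔢 ∈ Set.Icc (0:ℝ) (lamMax hps.isHermitian))
    (hopt : ∀ e ∈ Set.Icc (0:ℝ) (lamMax hps.isHermitian), ∀ n : ℕ, 1 ≤ n →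
      ∃ σ : Matrix (Fin d) (Fin d) ℂ, IsDensity σ ∧ (σ * h).trace.re ≤ e ∧
        ∀ ψ : Fin n → (Fin d → ℂ), (∀ i, star (ψ i) ⬝ᵥ ψ i = 1) →
          (∑ i, (star (ψ i) ⬝ᵥ h.mulVec (ψ i)).re) ≤ n * e →
          ergo (Λfam n (prodMat fun i => Matrix.vecMulVec (ψ i) (star (ψ i)))) (hSum h n)
            ≤ ergo (tpow (Λ σ) n) (hSum h n))
 :
    Tendsto (fun n : ℕ => EsepN Λfam h n (n * 𝔢) / n) atTop
      (𝓝 (chiTot Λ h (lamMax hps.isHermitian) 𝔢)) :=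
  statement14_general Λ (fun _ => hΛ.isDensity) h hps Λfam hΛfam
    ((hopt 0 ⟨le_rfl, lamMax_nonneg hps⟩ 1 le_rfl).imp fun _ hσ => ⟨hσ.1, hσ.2.1⟩)
    ((eventually_ge_atTop 1).mono fun n hn _ hψ => ergo_map_pure_le_mul_E1tot hps
      (fun _ => hΛ.isDensity) hn (fun e he => hopt e he n hn) hψ) h𝔢.1

end
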